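/- Let (T, R, A) be weakly G-quasiapproximable or weakly G-approximable. Then for any integer i, any positive integer m, and any K ∈ T^c ∩ R_i, there exist an object L and a distinguished triangle E → K ⊕ L → D → ΣE with E ∈ G^{[-A-m+1-i, A-i]} and D ∈ G^{(-∞, A-m-i]}. If (T, R, A) is moreover G-quasiapproximable or G-approximable, then the triangle can be chosen with E ∈ G^{[-A-m+1-i, A-i]}_{mA}. -/

import Mathlib

namespace GApprox

open CategoryTheory CategoryTheory.Limits CategoryTheory.Pretriangulated

universe w v u

variable (C : Type u) [Category.{v} C] [HasZeroObject C] [HasShift C ℤ]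
  [Preadditive C] [∀ n : ℤ, (shiftFunctor C n).Additive] [Pretriangulated C]
  [HasCoproducts.{v} C]

/-- The right orthogonal of a class of objects. -/
def rOrth (A : Set C) : Set C := {X | ∀ a ∈ A, ∀ f : a ⟶ X, f = 0}

/-- The left orthogonal of a class of objects. -/
def lOrth (A : Set C) : Set C := {X | ∀ a ∈ A, ∀ f : X ⟶ a, f = 0}

/-- `Hom(A, B) = 0`. -/
def homZero (A B : Set C) : Prop := ∀ a ∈ A, ∀ b ∈ B, ∀ f : a ⟶ b, f = 0

/-- The star operation `A ⋆ B`: objects `Y` admitting a distinguished triangle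
`X ⟶ Y ⟶ Z ⟶ ΣX` with `X ∈ A` and `Z ∈ B`. -/
def starSet (A B : Set C) : Set C :=
  {Y | ∃ (X Z : C) (f : X ⟶ Y) (g : Y ⟶ Z) (h : Z ⟶ X⟦(1 : ℤ)⟧),
    Triangle.mk f g h ∈ (distTriang C) ∧ X ∈ A ∧ Z ∈ B}

/-- The (strictly full) shift `Σⁿ A` of a class of objects. -/
def shiftSet (n : ℤ) (A : Set C) : Set C :=
  {X | ∃ a ∈ A, Nonempty (X ≅ (shiftFunctor C n).obj a)}

/-- An object is compact if any map to a coproduct factors through a finite subcoproduct. -/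
def IsCompactObj (X : C) : Prop :=
  ∀ (α : Type v) (f : α → C) (g : X ⟶ ∐ f),
    ∃ (s : Finset α) (h : X ⟶ ∐ (fun i : {a : α // a ∈ s} => f i.1)),
      g = h ≫ Sigma.desc (fun i => Sigma.ι f i.1)

/-- The class of compact objects `T^c`. -/
def compacts : Set C := {X | IsCompactObj C X}

/-- The category is compactly generated. -/
def CompactlyGenerated : Prop :=
  ∀ X : C, (∀ K ∈ compacts C, ∀ f : K ⟶ X, f = 0) → IsZero X

/-- Closure under direct summands (retracts), `smd`. -/
def smd (A : Set C) : Set C :=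
  {X | ∃ Y ∈ A, ∃ (i : X ⟶ Y) (r : Y ⟶ X), i ≫ r = 𝟙 X}

/-- Closure of a class of objects under finite direct sums and extensions (`coprod`). -/
inductive extClosure (U : Set C) : C → Prop
  | of {X : C} : X ∈ U → extClosure U X
  | zero {X : C} : IsZero X → extClosure U X
  | ext {X Y Z : C} (f : X ⟶ Y) (g : Y ⟶ Z) (h : Z ⟶ X⟦(1 : ℤ)⟧) :
      Triangle.mk f g h ∈ (distTriang C) → extClosure U X → extClosure U Z → extClosure U Y

/-- Closure of a class of objects under arbitrary coproducts, extensions and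
direct summands. -/
inductive bigClosure (U : Set C) : C → Prop
  | of {X : C} : X ∈ U → bigClosure U X
  | zero {X : C} : IsZero X → bigClosure U X
  | coprod {α : Type v} (f : α → C) :
      (∀ i, bigClosure U (f i)) → ∀ {X : C}, (X ≅ ∐ f) → bigClosure U X
  | ext {X Y Z : C} (f : X ⟶ Y) (g : Y ⟶ Z) (h : Z ⟶ X⟦(1 : ℤ)⟧) :
      Triangle.mk f g h ∈ (distTriang C) → bigClosure U X → bigClosure U Z → bigClosure U Y
  | retract {X Y : C} (i : X ⟶ Y) (r : Y ⟶ X) :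
      i ≫ r = 𝟙 X → bigClosure U Y → bigClosure U X

/-- Closure of a class of objects under finite direct sums, `add`. -/
def addClosure (U : Set C) : Set C :=
  {X | ∃ (n : ℕ) (f : ULift.{v} (Fin n) → C), (∀ i, f i ∈ U) ∧ Nonempty (X ≅ ∐ f)}

/-- Closure of a class of objects under arbitrary coproducts, `Add`. -/
def bigAddClosure (U : Set C) : Set C :=
  {X | ∃ (α : Type v) (f : α → C), (∀ i, f i ∈ U) ∧ Nonempty (X ≅ ∐ f)}

/-- `coprod_n(U)`. -/
def coprodPow (U : Set C) : ℕ → Set C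
  | 0 => {X | IsZero X}
  | n + 1 => starSet C (addClosure C U) (coprodPow U n)

/-- `Coprod_n(U)`. -/
def coprodPowBig (U : Set C) : ℕ → Set C
  | 0 => {X | IsZero X}
  | n + 1 => starSet C (bigAddClosure C U) (coprodPowBig U n)

/-- `G[a,b] = ∪ { G^m : a ≤ m ≤ b }`. -/
def unionIcc (G : ℤ → Set C) (a b : ℤ) : Set C := ⋃ m ∈ Set.Icc a b, G m

/-- `G(-∞,b] = ∪ { G^m : m ≤ b }`. -/
def unionIic (G : ℤ → Set C) (b : ℤ) : Set C := ⋃ m ∈ Set.Iic b, G m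

/-- `G(-∞,∞) = ∪ { G^m : m ∈ ℤ }`. -/
def unionAll (G : ℤ → Set C) : Set C := ⋃ m : ℤ, G m

/-- `G^{[a,b]} = smd(coprod(G[a,b]))`. -/
def gInt (G : ℤ → Set C) (a b : ℤ) : Set C :=
  smd C {X | extClosure C (unionIcc C G a b) X}

/-- `G^{(-∞,b]} = smd(coprod(G(-∞,b]))`. -/
def gIic (G : ℤ → Set C) (b : ℤ) : Set C :=
  smd C {X | extClosure C (unionIic C G b) X}

/-- `G^{[a,b]}_k = smd(coprod_k(G[a,b]))`. -/
def gIntPow (G : ℤ → Set C) (a b k : ℤ) : Set C :=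
  smd C (coprodPow C (unionIcc C G a b) k.toNat)

/-- `Ḡ^{[a,b]}`. -/
def gBarInt (G : ℤ → Set C) (a b : ℤ) : Set C :=
  {X | bigClosure C (unionIcc C G a b) X}

/-- `Ḡ^{(-∞,b]}`. -/
def gBarIic (G : ℤ → Set C) (b : ℤ) : Set C :=
  {X | bigClosure C (unionIic C G b) X}

/-- `Ḡ^{[a,b]}_k = smd(Coprod_k(G[a,b]))`. -/
def gBarIntPow (G : ℤ → Set C) (a b k : ℤ) : Set C :=
  smd C (coprodPowBig C (unionIcc C G a b) k.toNat)

/-- `M^G_n := G^{(-∞,-n]}`. -/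
def MG (G : ℤ → Set C) (n : ℤ) : Set C := gIic C G (-n)

/-- `R^G_n := ⊥((M^G_n)^⊥)`, orthogonals taken in the whole category. -/
def RG (G : ℤ → Set C) (n : ℤ) : Set C := lOrth C (rOrth C (MG C G n))

/-- A pre-generating sequence. -/
structure IsPreGenSeq (G : ℤ → Set C) : Prop where
  compact : ∀ i : ℤ, G i ⊆ compacts C
  generates : smd C {X | extClosure C (unionAll C G) X} = compacts C

/-- A generating sequence. -/
structure IsGenSeq (G : ℤ → Set C) extends IsPreGenSeq C G : Prop where
  shift_cond : ∀ n : ℤ,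
    shiftSet C (-1) (G n) ∪ G n ∪ shiftSet C 1 (G n) ⊆ gInt C G (n - 1) (n + 1)

/-- A finite generating sequence. -/
structure IsFinGenSeq (G : ℤ → Set C) extends IsGenSeq C G : Prop where
  finite : ∀ i : ℤ, (G i).Finite

/-- ℕ-equivalence of generating sequences. -/
def GenSeqNEquiv (G G' : ℤ → Set C) : Prop :=
  ∃ N : ℤ, 0 ≤ N ∧ (∀ n : ℤ, G' n ⊆ gInt C G (n - N) (n + N)) ∧
    ∀ n : ℤ, G n ⊆ gInt C G' (n - N) (n + N)

/-- ℕ-equivalence of (extended good) metrics. -/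
def MetricNEquiv (M N : ℤ → Set C) : Prop :=
  ∃ n : ℤ, 0 ≤ n ∧ (∀ i : ℤ, M (i + n) ⊆ N i) ∧ ∀ i : ℤ, N (i + n) ⊆ M i

/-- An extended good metric. -/
structure IsExtGoodMetric (M : ℤ → Set C) : Prop where
  zero_mem : ∀ (n : ℤ) (X : C), IsZero X → X ∈ M n
  iso_closed : ∀ (n : ℤ) ⦃X Y : C⦄, (X ≅ Y) → X ∈ M n → Y ∈ M n
  star_subset : ∀ n : ℤ, starSet C (M n) (M n) ⊆ M n
  shift_one : ∀ n : ℤ, shiftSet C 1 (M (n + 1)) ⊆ M n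
  antitone : ∀ n : ℤ, M (n + 1) ⊆ M n
  shift_neg_one : ∀ n : ℤ, shiftSet C (-1) (M (n + 1)) ⊆ M n

/-- An orthogonal metric. -/
structure IsOrthMetric (M : ℤ → Set C) extends IsExtGoodMetric C M : Prop where
  orth : ∀ n : ℤ, lOrth C (rOrth C (M n)) = M n

/-- The closure of the compacts `T̄^c := ∩ₙ T^c ⋆ Rₙ`. -/
def closCompacts (Rm : ℤ → Set C) : Set C := ⋂ n : ℤ, starSet C (compacts C) (Rm n)

/-- `(T, R, A)` is `G`-preapproximable. -/
structure IsGPreApprox (G Rm : ℤ → Set C) (A : ℤ) : Prop where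
  orthMetric : IsOrthMetric C Rm
  A_pos : 0 < A
  cond0 : ∀ i : ℤ, MG C G i ⊆ ⋃ n ∈ {n : ℤ | |n| ≤ A}, shiftSet C n (MG C G (i + 1))
  cond1 : ∀ i : ℤ, MG C G (i + A) ⊆ Rm i ∩ compacts C
  cond2 : ∀ n : ℤ, ∃ N : ℤ, ∀ i : ℤ, N ≤ i → homZero C (G n) (Rm i)

/-- There is a distinguished triangle `E ⟶ F ⟶ D ⟶ ΣE` with `E ∈ S` and `D ∈ D`. -/
def approxTriangle (F : C) (S D : Set C) : Prop :=
  ∃ (E Dd : C) (f : E ⟶ F) (g : F ⟶ Dd) (h : Dd ⟶ E⟦(1 : ℤ)⟧),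
    Triangle.mk f g h ∈ (distTriang C) ∧ E ∈ S ∧ Dd ∈ D

/-- `(T, R, A)` is weakly `G`-approximable. -/
structure IsWeakGApprox (G Rm : ℤ → Set C) (A : ℤ) extends IsGPreApprox C G Rm A : Prop where
  hom_vanish : ∀ n i : ℤ, A ≤ n + i → homZero C (G n) (Rm i)
  approx : ∀ i : ℤ, ∀ F ∈ Rm i,
    approxTriangle C F (gBarInt C G (-A - i) (A - i)) (Rm (i + 1))

/-- `(T, R, A)` is `G`-approximable. -/
structure IsGApprox (G Rm : ℤ → Set C) (A : ℤ) extends IsWeakGApprox C G Rm A : Prop where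
  approx' : ∀ i : ℤ, ∀ F ∈ Rm i,
    approxTriangle C F (gBarIntPow C G (-A - i) (A - i) A) (Rm (i + 1))

/-- `(T, R, A)` is weakly `G`-quasiapproximable. -/
structure IsWeakGQuasiApprox (G Rm : ℤ → Set C) (A : ℤ) extends IsGPreApprox C G Rm A : Prop where
  hom_vanish : ∀ n i : ℤ, A ≤ n + i → homZero C (G n) (Rm i)
  approx : ∀ i : ℤ, ∀ F ∈ Rm i ∩ closCompacts C Rm,
    approxTriangle C F (gBarInt C G (-A - i) (A - i)) (Rm (i + 1) ∩ closCompacts C Rm)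

/-- `(T, R, A)` is `G`-quasiapproximable. -/
structure IsGQuasiApprox (G Rm : ℤ → Set C) (A : ℤ) extends IsWeakGQuasiApprox C G Rm A : Prop where
  approx' : ∀ i : ℤ, ∀ F ∈ Rm i ∩ closCompacts C Rm,
    approxTriangle C F (gBarIntPow C G (-A - i) (A - i) A) (Rm (i + 1) ∩ closCompacts C Rm)

/-- The coproduct of a sequence of objects. -/
noncomputable def seqCoprod (E : ℕ → C) : C := ∐ (fun n : ULift.{v} ℕ => E n.down)

/-- The canonical inclusion into the coproduct of a sequence. -/
noncomputable def seqInj (E : ℕ → C) (n : ℕ) : E n ⟶ seqCoprod C E :=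
  Sigma.ι (fun n : ULift.{v} ℕ => E n.down) (ULift.up n)

/-- The map `1 - shift` on the coproduct of a sequence. -/
noncomputable def oneMinusShift (E : ℕ → C) (e : ∀ n, E n ⟶ E (n + 1)) :
    seqCoprod C E ⟶ seqCoprod C E :=
  Sigma.desc (fun n => seqInj C E n.down - e n.down ≫ seqInj C E (n.down + 1))

/-- `H`, equipped with `π`, `δ`, is a homotopy colimit of the sequence `E`. -/
def IsHocolim (E : ℕ → C) (e : ∀ n, E n ⟶ E (n + 1)) (H : C)
    (π : seqCoprod C E ⟶ H) (δ : H ⟶ (seqCoprod C E)⟦(1 : ℤ)⟧) : Prop :=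
  Triangle.mk (oneMinusShift C E e) π δ ∈ (distTriang C)

/-- A single compact generator. -/
def IsCompactGenerator (G₀ : C) : Prop :=
  IsCompactObj C G₀ ∧ ∀ X : C, (∀ n : ℤ, ∀ f : (shiftFunctor C n).obj G₀ ⟶ X, f = 0) → IsZero X

/-- The strictly full subcategory `{Σʲ G₀}`. -/
def singletonShift (G₀ : C) (j : ℤ) : Set C :=
  {X | Nonempty (X ≅ (shiftFunctor C j).obj G₀)}

/-- The generating sequence `Gⁿ := {Σ⁻ⁿ G₀}`. -/
def genSeqNeg (G₀ : C) (n : ℤ) : Set C := singletonShift C G₀ (-n)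

/-- The generating sequence `Gⁿ := {Σⁿ G₀}`. -/
def genSeqPos (G₀ : C) (n : ℤ) : Set C := singletonShift C G₀ n

/-- The direct sum of two objects, realized as a binary coproduct. -/
noncomputable def csum (X Y : C) : C := ∐ (fun b : ULift.{v} Bool => cond b.down X Y)

/-!
Approximating `K ∈ R_i` by `m` successive triangles writes it, up to direct summands, as an iterated
extension of objects of `Ḡ^{[-A-m+1-i,A-i]}` and an object of `R_{i+m}`. Since
`R_{i+m} = ⊥(R_{i+m}^⊥)` is detected by the vanishing of `Hom(-, t)`, the extension can be
reassociated into a single triangle with third term in `R_{i+m}`; the five lemma takes the place of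
the octahedron.

To replace its outer terms by compact ones, consider for a class `S` the objects `X` such that every
morphism from a compact object to `X` factors through `S`. The objects of `Ḡ^{[a,b]}` have this
property for `S = coprod(G[a,b])`, and those of `R_j` for `S = coprod(G(-∞,A-j])`: approximate until
the remaining term receives no non-zero morphism from the given compact object. The property passes
to extensions when the class for the third term consists of compact objects. Applied to the identity
of the compact object `K`, it exhibits `K` as a direct summand of the middle term of a triangle with
the required outer terms.

In the quasi-approximable case the same argument is carried out inside `T^c`, because a term of
`T̄^c` in an approximating triangle of a compact object is itself compact.
-/

section TriangulatedLemmas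

variable {T : Type u} [Category.{v} T]

lemma subset_smd (S : Set T) : S ⊆ smd T S :=
  fun X hX => ⟨X, hX, 𝟙 X, 𝟙 X, Category.comp_id _⟩

lemma smd_subset_smd {S S' : Set T} (h : S ⊆ smd T S') : smd T S ⊆ smd T S' := by
  rintro X ⟨Y, hY, i, r, hir⟩
  obtain ⟨Z, hZ, i', r', hir'⟩ := h hY
  exact ⟨Z, hZ, i ≫ i', r' ≫ r, by rw [Category.assoc, reassoc_of% hir', hir]⟩

lemma smd_mono {S S' : Set T} (h : S ⊆ S') : smd T S ⊆ smd T S' :=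
  smd_subset_smd (h.trans (subset_smd S'))

lemma smd_eq_retractClosure (S : Set T) :
    smd T S = {X | ObjectProperty.retractClosure (fun Y => Y ∈ S) X} :=
  Set.ext fun _ =>
    ⟨fun ⟨Y, hY, i, r, hir⟩ => ⟨Y, hY, ⟨⟨i, r, hir⟩⟩⟩,
      fun ⟨Y, hY, ⟨ρ⟩⟩ => ⟨Y, hY, ρ.i, ρ.r, ρ.retract⟩⟩

variable [Preadditive T]

lemma mem_of_lOrth_rOrth_subset {B : Set T} (hB : lOrth T (rOrth T B) ⊆ B) {X X' : T} (hX : X ∈ B)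
    (h : ∀ t : T, (∀ x : X ⟶ t, x = 0) → ∀ x : X' ⟶ t, x = 0) : X' ∈ B :=
  hB fun t ht => h t (ht X hX)

lemma smd_lOrth_subset (S : Set T) : smd T (lOrth T S) ⊆ lOrth T S := by
  rintro X ⟨Y, hY, i, r, e⟩ t ht k
  rw [← Category.id_comp k, ← e, Category.assoc, hY t ht (r ≫ k), comp_zero]

variable [HasShift T ℤ]

/-- The conditions on `Hom(f, t)` and `Hom(Σf, t)` which, by the long exact sequence, amount to
the vanishing of `Hom(-, t)` on a cone of `f`. They are stated without choosing a cone. -/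
def ConeOrth {X Y : T} (f : X ⟶ Y) (t : T) : Prop :=
  (∀ k : Y ⟶ t, f ≫ k = 0 → k = 0) ∧
    ∀ k : X⟦(1 : ℤ)⟧ ⟶ t, ∃ l : Y⟦(1 : ℤ)⟧ ⟶ t, k = f⟦(1 : ℤ)⟧' ≫ l

lemma coneOrth_of_isIso {X Y : T} (f : X ⟶ Y) [IsIso f] (t : T) : ConeOrth f t :=
  ⟨fun _ hk => (cancel_epi f).1 (hk.trans comp_zero.symm),
    fun k => ⟨inv (f⟦(1 : ℤ)⟧') ≫ k, by simp⟩⟩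

variable [HasZeroObject T] [∀ n : ℤ, (shiftFunctor T n).Additive] [Pretriangulated T]

lemma starSet_mono {L L' M M' : Set T} (hL : L ⊆ L') (hM : M ⊆ M') :
    starSet T L M ⊆ starSet T L' M' :=
  fun _ ⟨X, Z, f, g, h, hT, hX, hZ⟩ => ⟨X, Z, f, g, h, hT, hL hX, hM hZ⟩

lemma mem_starSet_of_iso {L M : Set T} {X Y : T} (e : X ≅ Y) (hX : X ∈ starSet T L M) :
    Y ∈ starSet T L M :=
  (ObjectProperty.extensionProduct (fun X => X ∈ L) (fun X => X ∈ M)).prop_of_iso e hX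

lemma starSet_iterate_mono {L L' B B' : Set T} (hL : L ⊆ L') (hB : B ⊆ B') (n : ℕ) :
    (starSet T L)^[n] B ⊆ (starSet T L')^[n] B' := by
  induction n with
  | zero => exact hB
  | succ n ih => simpa only [Function.iterate_succ_apply'] using starSet_mono hL ih

lemma subset_starSet_of_isZero (B : Set T) : B ⊆ starSet T {X | IsZero X} B :=
  fun X hX => ⟨_, X, _, _, _, contractible_distinguished₁ X, isZero_zero T, hX⟩

lemma starSet_smd_smd_subset (L M : Set T) :
    starSet T (smd T L) (smd T M) ⊆ smd T (starSet T L M) := by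
  simp only [smd_eq_retractClosure]
  exact ObjectProperty.extensionProduct_retractClosure_retractClosure_le _ _

lemma starSet_iterate_smd_subset (L B : Set T) (n : ℕ) :
    (starSet T L)^[n] (smd T B) ⊆ smd T ((starSet T L)^[n] B) := by
  induction n with
  | zero => rfl
  | succ n ih =>
    simp only [Function.iterate_succ_apply']
    exact (starSet_mono (subset_smd L) ih).trans (starSet_smd_smd_subset _ _)

lemma subset_smd_starSet_iterate_mul {L : Set T} {B : ℕ → Set T} {k n : ℕ}
    (h : ∀ j < n, B j ⊆ smd T ((starSet T L)^[k] (B (j + 1)))) :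
    B 0 ⊆ smd T ((starSet T L)^[n * k] (B n)) := by
  induction n with
  | zero => simpa using subset_smd (B 0)
  | succ n ih =>
    refine (ih fun j hj => h j (by omega)).trans (smd_subset_smd ?_)
    rw [Nat.succ_mul, Function.iterate_add_apply]
    exact (starSet_iterate_mono subset_rfl (h n n.lt_succ_self) _).trans
      (starSet_iterate_smd_subset _ _ _)

instance isTriangulated_top : ObjectProperty.IsTriangulated (⊤ : ObjectProperty T) where
  toIsTriangulatedClosed₂ := .mk' fun _ _ _ _ => trivial

lemma starSet_subset_of_isTriangulatedClosed₂ {P : ObjectProperty T} [P.IsTriangulatedClosed₂]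
    [P.IsClosedUnderIsomorphisms] {L M : Set T} (hL : L ⊆ {X | P X}) (hM : M ⊆ {X | P X}) :
    starSet T L M ⊆ {X | P X} :=
  fun _ ⟨_, _, _, _, _, hT, hX, hZ⟩ =>
    P.ext_of_isTriangulatedClosed₂ _ hT (hL hX) (hM hZ)

lemma starSet_iterate_subset_of_isTriangulatedClosed₂ {P : ObjectProperty T}
    [P.IsTriangulatedClosed₂] [P.IsClosedUnderIsomorphisms] {L B : Set T} (hL : L ⊆ {X | P X})
    (hB : B ⊆ {X | P X}) (n : ℕ) : (starSet T L)^[n] B ⊆ {X | P X} := by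
  induction n with
  | zero => exact hB
  | succ n ih =>
    rw [Function.iterate_succ_apply']
    exact starSet_subset_of_isTriangulatedClosed₂ hL ih

lemma starSet_lOrth_subset (S : Set T) : starSet T (lOrth T S) (lOrth T S) ⊆ lOrth T S := by
  rintro Y ⟨X, Z, f, g, h, hT, hX, hZ⟩ t ht k
  obtain ⟨l, rfl⟩ := Triangle.yoneda_exact₂ _ hT k (hX t ht _)
  exact (congrArg (g ≫ ·) (hZ t ht l)).trans comp_zero

lemma mem_smd_of_mem_starSet_of_mem_lOrth {S M : Set T} {X : T} (hX : X ∈ starSet T S M)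
    (hXM : X ∈ lOrth T M) : X ∈ smd T S := by
  obtain ⟨Y, Z, f, g, h, hT, hY, hZ⟩ := hX
  obtain ⟨s, hs⟩ := Triangle.coyoneda_exact₂ _ hT (𝟙 X) (hXM Z hZ _)
  exact ⟨Y, hY, s, f, hs.symm⟩

lemma starSet_extClosure_subset (U : Set T) :
    starSet T {X | extClosure T U X} {X | extClosure T U X} ⊆ {X | extClosure T U X} :=
  fun _ ⟨_, _, f, g, h, hT, hX, hZ⟩ => .ext f g h hT hX hZ

lemma extClosure_mono {U V : Set T} (h : U ⊆ V) :
    {X | extClosure T U X} ⊆ {X | extClosure T V X} := by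
  intro X hX
  induction hX with
  | of hX => exact .of (h hX)
  | zero hX => exact .zero hX
  | ext f g h hT _ _ hX hZ => exact .ext f g h hT hX hZ

lemma coprodPow_eq_iterate (U : Set T) (n : ℕ) :
    coprodPow T U n = (starSet T (addClosure T U))^[n] {X | IsZero X} := by
  induction n with
  | zero => rfl
  | succ n ih => rw [Function.iterate_succ_apply', ← ih, coprodPow]

section

variable {X Y Z : T} {f : X ⟶ Y} {g : Y ⟶ Z} {h : Z ⟶ X⟦(1 : ℤ)⟧}

lemma rot_mk_of_distTriang (hT : Triangle.mk f g h ∈ distTriang T) :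
    Triangle.mk g h (-f⟦(1 : ℤ)⟧') ∈ distTriang T :=
  rot_of_distTriang _ hT

lemma yoneda_exact₁ (hT : Triangle.mk f g h ∈ distTriang T) {t : T} (k : X⟦(1 : ℤ)⟧ ⟶ t)
    (hk : h ≫ k = 0) : ∃ l : Y⟦(1 : ℤ)⟧ ⟶ t, k = f⟦(1 : ℤ)⟧' ≫ l := by
  obtain ⟨l, rfl⟩ := Triangle.yoneda_exact₃ _ (rot_mk_of_distTriang hT) k hk
  exact ⟨-l, (Preadditive.neg_comp _ _).trans (Preadditive.comp_neg _ _).symm⟩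

lemma yoneda_exact_shift₂ (hT : Triangle.mk f g h ∈ distTriang T) {t : T}
    (k : Y⟦(1 : ℤ)⟧ ⟶ t) (hk : f⟦(1 : ℤ)⟧' ≫ k = 0) :
    ∃ l : Z⟦(1 : ℤ)⟧ ⟶ t, k = g⟦(1 : ℤ)⟧' ≫ l :=
  yoneda_exact₁ (rot_mk_of_distTriang hT) k (by rw [Preadditive.neg_comp, hk, neg_zero])

lemma coneOrth_iff (hT : Triangle.mk f g h ∈ distTriang T) (t : T) :
    ConeOrth f t ↔ ∀ x : Z ⟶ t, x = 0 := by
  refine ⟨fun ⟨hinj, hsurj⟩ x => ?_, fun hZ => ⟨fun k hk => ?_, fun k => ?_⟩⟩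
  · have hx : g ≫ x = 0 :=
      hinj _ ((comp_distTriang_mor_zero₁₂_assoc _ hT x).trans zero_comp)
    obtain ⟨y, rfl⟩ := Triangle.yoneda_exact₃ _ hT x hx
    obtain ⟨z, rfl⟩ := hsurj y
    exact (comp_distTriang_mor_zero₃₁_assoc _ hT z).trans zero_comp
  · obtain ⟨m, rfl⟩ := Triangle.yoneda_exact₂ _ hT k hk
    exact (congrArg (g ≫ ·) (hZ m)).trans comp_zero
  · exact yoneda_exact₁ hT k (hZ _)

-- This is the five lemma, applied to the long exact sequences of the two triangles.
lemma ConeOrth.of_triangle_hom {X' Y' Z' : T} {f' : X' ⟶ Y'} {g' : Y' ⟶ Z'}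
    {h' : Z' ⟶ X'⟦(1 : ℤ)⟧} (hT : Triangle.mk f g h ∈ distTriang T)
    (hT' : Triangle.mk f' g' h' ∈ distTriang T) {a : X ⟶ X'} {b : Y ⟶ Y'} {c : Z ⟶ Z'}
    (comm₁ : f ≫ b = a ≫ f') (comm₂ : g ≫ c = b ≫ g') (comm₃ : h ≫ a⟦(1 : ℤ)⟧' = c ≫ h')
    {t : T} (ha : ConeOrth a t) (hc : ConeOrth c t) : ConeOrth b t := by
  have zero₂₃ : g' ≫ h' = 0 := comp_distTriang_mor_zero₂₃ _ hT'
  have zero₃₁ : h ≫ f⟦(1 : ℤ)⟧' = 0 := comp_distTriang_mor_zero₃₁ _ hT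
  refine ⟨fun k hk => ?_, fun k => ?_⟩
  · obtain ⟨d : Z' ⟶ t, rfl : k = g' ≫ d⟩ := Triangle.yoneda_exact₂ _ hT' k
      (ha.1 (f' ≫ k) (by rw [← reassoc_of% comm₁, hk, comp_zero]))
    obtain ⟨e, he : c ≫ d = h ≫ e⟩ :=
      Triangle.yoneda_exact₃ _ hT (c ≫ d) (by
        change g ≫ c ≫ d = 0
        rw [reassoc_of% comm₂, hk])
    obtain ⟨e', rfl⟩ := ha.2 e
    have hd : d - h' ≫ e' = 0 := hc.1 _ (by
      rw [Preadditive.comp_sub, he, reassoc_of% comm₃, sub_self])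
    rw [sub_eq_zero.1 hd, reassoc_of% zero₂₃, zero_comp]
  · obtain ⟨l, hl⟩ := ha.2 (f⟦(1 : ℤ)⟧' ≫ k)
    obtain ⟨l', rfl⟩ := yoneda_exact₁ hT' l (hc.1 _ (by
      rw [← reassoc_of% comm₃, ← hl, reassoc_of% zero₃₁, zero_comp]))
    obtain ⟨z, hz⟩ := yoneda_exact_shift₂ hT (k - b⟦(1 : ℤ)⟧' ≫ l') (by
      rw [Preadditive.comp_sub, hl, ← Functor.map_comp_assoc, ← Functor.map_comp_assoc,
        comm₁, sub_self])
    obtain ⟨w, rfl⟩ := hc.2 z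
    refine ⟨l' + g'⟦(1 : ℤ)⟧' ≫ w, ?_⟩
    rw [Preadditive.comp_add, ← Functor.map_comp_assoc, ← comm₂, Functor.map_comp_assoc, ← hz]
    abel

end

section Reassociation

variable {P : ObjectProperty T} [P.IsTriangulated] [P.IsClosedUnderIsomorphisms] {B L S : Set T}

-- In the absence of octahedra the cone may change, but it stays in the class `⊥(B^⊥)`.
lemma starSet_starSet_subset (hB : lOrth T (rOrth T B) ⊆ B) (hL : L ⊆ {X | P X})
    (hS : S ⊆ {X | P X}) :
    starSet T L (starSet T S (B ∩ {X | P X})) ⊆ starSet T (starSet T L S) (B ∩ {X | P X}) := by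
  rintro K ⟨E₁, D₁, a, b, c, h₁, hE₁, E', D₂, a', b', c', h₂, hE', hD₂⟩
  obtain ⟨E₂, i, p, h₃⟩ := distinguished_cocone_triangle₂ (a' ≫ c)
  have comm₃ : (a' ≫ c) ≫ (𝟙 E₁)⟦(1 : ℤ)⟧' = a' ≫ c := by
    rw [CategoryTheory.Functor.map_id, Category.comp_id]
  obtain ⟨φ, comm₁, comm₂⟩ :=
    complete_distinguished_triangle_morphism₂ _ _ h₃ h₁ (𝟙 E₁) a' comm₃
  obtain ⟨D, r, s, h₄⟩ := distinguished_cocone_triangle φ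
  have hDB : D ∈ B := mem_of_lOrth_rOrth_subset hB hD₂.1 fun t ht =>
    (coneOrth_iff h₄ t).1 (.of_triangle_hom h₃ h₁ comm₁ comm₂ comm₃
      (coneOrth_of_isIso (𝟙 E₁) t) ((coneOrth_iff h₂ t).2 ht))
  have hE₂P : P E₂ := P.ext_of_isTriangulatedClosed₂ _ h₃ (hL hE₁) (hS hE')
  have hKP : P K := P.ext_of_isTriangulatedClosed₂ _ h₁ (hL hE₁)
    (P.ext_of_isTriangulatedClosed₂ _ h₂ (hS hE') hD₂.2)
  exact ⟨E₂, D, φ, r, s, h₄, ⟨E₁, E', i, p, _, h₃, hE₁, hE'⟩, hDB,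
    P.ext_of_isTriangulatedClosed₃ _ h₄ hE₂P hKP⟩

lemma starSet_starSet_inter_subset (hB : lOrth T (rOrth T B) ⊆ B) (hL : L ⊆ {X | P X}) :
    starSet T (starSet T L S) B ∩ {X | P X} ⊆ starSet T L (starSet T S B ∩ {X | P X}) := by
  rintro K ⟨⟨X, D, f, g, h, hT, ⟨Q, X', u, v, w, hX, hQ, hX'⟩, hD⟩, hK⟩
  obtain ⟨V, g', h', hV⟩ := distinguished_cocone_triangle (u ≫ f)
  have comm₁ : u ≫ f = 𝟙 Q ≫ u ≫ f := (Category.id_comp _).symm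
  obtain ⟨q, comm₂, comm₃⟩ :=
    complete_distinguished_triangle_morphism _ _ hX hV (𝟙 Q) f comm₁
  have comm₄ : (-u⟦(1 : ℤ)⟧') ≫ f⟦(1 : ℤ)⟧' = (𝟙 Q)⟦(1 : ℤ)⟧' ≫ (-(u ≫ f)⟦(1 : ℤ)⟧') := by
    rw [Preadditive.neg_comp, Preadditive.comp_neg, ← Functor.map_comp, ← Functor.map_comp, ← comm₁]
  obtain ⟨D', r, s, hq⟩ := distinguished_cocone_triangle q
  have hD' : D' ∈ B := mem_of_lOrth_rOrth_subset hB hD fun t ht =>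
    (coneOrth_iff hq t).1 (.of_triangle_hom (rot_mk_of_distTriang hX) (rot_mk_of_distTriang hV)
      comm₂ comm₃ comm₄ ((coneOrth_iff hT t).2 ht) (coneOrth_of_isIso ((𝟙 Q)⟦(1 : ℤ)⟧') t))
  exact ⟨Q, V, _, _, _, hV, hQ, ⟨X', D', q, r, s, hq, hX', hD'⟩,
    P.ext_of_isTriangulatedClosed₃ _ hV (hL hQ) hK⟩

lemma starSet_iterate_inter_subset (hB : lOrth T (rOrth T B) ⊆ B) (hL : L ⊆ {X | P X}) (n : ℕ) :
    (starSet T L)^[n] (B ∩ {X | P X}) ⊆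
      starSet T ((starSet T L)^[n] {X | IsZero X}) (B ∩ {X | P X}) := by
  induction n with
  | zero => exact subset_starSet_of_isZero _
  | succ n ih =>
    simp only [Function.iterate_succ_apply']
    refine (starSet_mono subset_rfl ih).trans (starSet_starSet_subset hB hL ?_)
    exact starSet_iterate_subset_of_isTriangulatedClosed₂ hL (fun X hX => P.prop_of_isZero hX) n

lemma starSet_iterate_isZero_inter_subset (hB : lOrth T (rOrth T B) ⊆ B) (hL : L ⊆ {X | P X})
    (n : ℕ) :
    starSet T ((starSet T L)^[n] {X | IsZero X}) B ∩ {X | P X} ⊆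
      (starSet T L)^[n] (B ∩ {X | P X}) := by
  induction n with
  | zero =>
    rintro K ⟨⟨X, D, f, g, h, hT, hX, hD⟩, hK⟩
    refine ⟨mem_of_lOrth_rOrth_subset hB hD fun t ht x => ?_, hK⟩
    obtain ⟨y, rfl⟩ := Triangle.yoneda_exact₂ _ hT x (IsZero.eq_of_src hX _ _)
    exact (congrArg (g ≫ ·) (ht y)).trans comp_zero
  | succ n ih =>
    simp only [Function.iterate_succ_apply']
    exact (starSet_starSet_inter_subset hB hL).trans (starSet_mono subset_rfl ih)

end Reassociation

lemma nonempty_biprod_iso_csum (X Y : T) : Nonempty (X ⊞ Y ≅ csum T X Y) := by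
  let F : ULift.{v} Bool → T := fun b => cond b.down X Y
  change Nonempty (X ⊞ Y ≅ ∐ F)
  let d : ∐ F ⟶ X ⊞ Y := Sigma.desc fun
    | ⟨true⟩ => biprod.inl
    | ⟨false⟩ => biprod.inr
  let ιX : X ⟶ ∐ F := Sigma.ι F ⟨true⟩
  let ιY : Y ⟶ ∐ F := Sigma.ι F ⟨false⟩
  have hX : ιX ≫ d = biprod.inl := Sigma.ι_desc _ _
  have hY : ιY ≫ d = biprod.inr := Sigma.ι_desc _ _
  refine ⟨biprod.desc ιX ιY, d, biprod.hom_ext' _ _ ?_ ?_, Sigma.hom_ext _ _ ?_⟩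
  · rw [biprod.inl_desc_assoc, hX, Category.comp_id]
  · rw [biprod.inr_desc_assoc, hY, Category.comp_id]
  · rintro ⟨_ | _⟩
    · change ιY ≫ d ≫ biprod.desc ιX ιY = ιY ≫ 𝟙 _
      rw [reassoc_of% hY, biprod.inr_desc, Category.comp_id]
    · change ιX ≫ d ≫ biprod.desc ιX ιY = ιX ≫ 𝟙 _
      rw [reassoc_of% hX, biprod.inl_desc, Category.comp_id]

lemma exists_iso_csum {K X : T} (i : K ⟶ X) (r : X ⟶ K) (e : i ≫ r = 𝟙 K) :
    ∃ L : T, Nonempty (X ≅ csum T K L) := by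
  have : IsSplitMono i := ⟨⟨⟨r, e⟩⟩⟩
  obtain ⟨L, p, q, hT⟩ := distinguished_cocone_triangle i
  have hm : Mono (Triangle.mk i p q).mor₁ := inferInstanceAs (Mono i)
  obtain ⟨ε, -⟩ := exists_iso_binaryBiproduct_of_distTriang _ hT
    (Triangle.mor₃_eq_zero_of_mono₁ _ hT hm)
  obtain ⟨ε'⟩ := nonempty_biprod_iso_csum K L
  exact ⟨L, ⟨ε ≪≫ ε'⟩⟩

end TriangulatedLemmas

section FactorsThru

variable {T : Type u} [Category.{v} T]

/-- The morphism `f` factors through an object of `S`. -/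
def FactorsThru (S : Set T) {P X : T} (f : P ⟶ X) : Prop :=
  ∃ Y ∈ S, ∃ (a : P ⟶ Y) (b : Y ⟶ X), a ≫ b = f

lemma factorsThru_of_mem_right {S : Set T} {P X : T} (hX : X ∈ S) (f : P ⟶ X) : FactorsThru S f :=
  ⟨X, hX, f, 𝟙 X, Category.comp_id f⟩

lemma FactorsThru.mono {S S' : Set T} {P X : T} {f : P ⟶ X} (hf : FactorsThru S f) (h : S ⊆ S') :
    FactorsThru S' f :=
  let ⟨Y, hY, a, b, e⟩ := hf
  ⟨Y, h hY, a, b, e⟩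

lemma FactorsThru.comp {S : Set T} {P X Y : T} {f : P ⟶ X} (hf : FactorsThru S f) (g : X ⟶ Y) :
    FactorsThru S (f ≫ g) :=
  let ⟨Z, hZ, a, b, e⟩ := hf
  ⟨Z, hZ, a, b ≫ g, by rw [← e, Category.assoc]⟩

variable [Preadditive T] [HasZeroObject T] [HasShift T ℤ]
  [∀ n : ℤ, (shiftFunctor T n).Additive] [Pretriangulated T]

lemma factorsThru_sum {S : Set T} (hzero : {X | IsZero X} ⊆ S) (hstar : starSet T S S ⊆ S)
    {ι : Type*} {s : Finset ι} {P X : T} {f : ι → (P ⟶ X)} (hf : ∀ i ∈ s, FactorsThru S (f i)) :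
    FactorsThru S (∑ i ∈ s, f i) := by
  refine Finset.sum_induction f (FactorsThru S) ?_ ⟨_, hzero (isZero_zero T), 0, 0, zero_comp⟩ hf
  rintro _ _ ⟨Y, hY, a, b, rfl⟩ ⟨Y', hY', a', b', rfl⟩
  exact ⟨Y ⊞ Y',
    hstar ⟨Y, Y', _, _, _, binaryBiproductTriangle_distinguished Y Y', hY, hY'⟩,
    biprod.lift a a', biprod.desc b b', biprod.lift_desc⟩

end FactorsThru

section Compacts

variable {T : Type u} [Category.{v} T] [HasCoproducts.{v} T]

lemma bigAddClosure_mono {U V : Set T} (h : U ⊆ V) : bigAddClosure T U ⊆ bigAddClosure T V :=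
  fun _ ⟨α, f, hf, e⟩ => ⟨α, f, fun i => h (hf i), e⟩

variable [Preadditive T]

open scoped Classical in
/-- The idempotent of `∐ f` projecting onto the finite subcoproduct indexed by `s`. -/
noncomputable def finiteProj {α : Type v} (f : α → T) (s : Finset α) : ∐ f ⟶ ∐ f :=
  ∑ i ∈ s, Sigma.π f i ≫ Sigma.ι f i

open scoped Classical in
lemma ι_finiteProj_of_mem {α : Type v} (f : α → T) {s : Finset α} {i : α} (hi : i ∈ s) :
    Sigma.ι f i ≫ finiteProj f s = Sigma.ι f i := by
  rw [finiteProj, Preadditive.comp_sum, Finset.sum_eq_single_of_mem i hi]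
  · simp
  · intro j _ hji
    rw [Sigma.ι_π_of_ne_assoc f hji.symm, zero_comp]

open scoped Classical in
lemma ι_finiteProj_of_notMem {α : Type v} (f : α → T) {s : Finset α} {i : α} (hi : i ∉ s) :
    Sigma.ι f i ≫ finiteProj f s = 0 := by
  rw [finiteProj, Preadditive.comp_sum]
  refine Finset.sum_eq_zero fun j hj => ?_
  rw [Sigma.ι_π_of_ne_assoc f (fun hij => hi (by rwa [hij])), zero_comp]

lemma finiteProj_comp_finiteProj {α : Type v} (f : α → T) {s t : Finset α} (hst : s ⊆ t) :
    finiteProj f s ≫ finiteProj f t = finiteProj f s := by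
  rw [finiteProj, Preadditive.sum_comp]
  refine Finset.sum_congr rfl fun i hi => ?_
  rw [Category.assoc, ι_finiteProj_of_mem f (hst hi)]

lemma map_finiteProj_comp_iso {T' : Type*} [Category.{v} T'] [HasCoproducts.{v} T']
    [Preadditive T'] (F : T ⥤ T') [F.Additive] {α : Type v} (f : α → T)
    [PreservesColimit (Discrete.functor f) F] (s : Finset α) :
    F.map (finiteProj f s) ≫ (PreservesCoproduct.iso F f).hom =
      (PreservesCoproduct.iso F f).hom ≫ finiteProj (fun i => F.obj (f i)) s := by
  rw [← Iso.inv_comp_eq, ← Category.assoc, ← Iso.eq_comp_inv, PreservesCoproduct.inv_hom]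
  refine Sigma.hom_ext _ _ fun i => ?_
  rw [ι_comp_sigmaComparison_assoc, ← Functor.map_comp]
  by_cases hi : i ∈ s
  · rw [ι_finiteProj_of_mem f hi, ← Category.assoc, ι_finiteProj_of_mem _ hi,
      ι_comp_sigmaComparison]
  · rw [ι_finiteProj_of_notMem f hi, ← Category.assoc, ι_finiteProj_of_notMem _ hi,
      Functor.map_zero, zero_comp]

variable [HasZeroObject T] [HasShift T ℤ] [∀ n : ℤ, (shiftFunctor T n).Additive] [Pretriangulated T]

/-- The objects `X` such that every morphism from a compact object to `X` factors through an
object of `S`. -/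
def compactsFactorThru (S : Set T) : Set T :=
  {X | ∀ P ∈ compacts T, ∀ f : P ⟶ X, FactorsThru S f}

lemma subset_compactsFactorThru (S : Set T) : S ⊆ compactsFactorThru S :=
  fun _ hX _ _ f => factorsThru_of_mem_right hX f

lemma compactsFactorThru_mono {S S' : Set T} (h : S ⊆ S') :
    compactsFactorThru S ⊆ compactsFactorThru S' :=
  fun _ hX P hP f => (hX P hP f).mono h

lemma smd_compactsFactorThru_subset (S : Set T) :
    smd T (compactsFactorThru S) ⊆ compactsFactorThru S := by
  rintro X ⟨Y, hY, i, r, e⟩ P hP f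
  simpa [e] using (hY P hP (f ≫ i)).comp r

lemma mem_smd_of_mem_compactsFactorThru {S : Set T} {X : T} (hX : X ∈ compacts T)
    (hXS : X ∈ compactsFactorThru S) : X ∈ smd T S :=
  hXS X hX (𝟙 X)

open scoped Classical in
lemma mem_compacts_iff {P : T} : P ∈ compacts T ↔
    ∀ (α : Type v) (f : α → T) (g : P ⟶ ∐ f), ∃ s : Finset α, g ≫ finiteProj f s = g := by
  refine forall₃_congr fun α f g => exists_congr fun s => ⟨?_, fun hs => ?_⟩
  · rintro ⟨h, rfl⟩
    rw [Category.assoc]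
    congr 1
    refine Sigma.hom_ext _ _ fun i => ?_
    rw [Sigma.ι_desc_assoc, Sigma.ι_desc, ι_finiteProj_of_mem f i.2]
  · refine ⟨∑ i : {a // a ∈ s}, g ≫ Sigma.π f i ≫ Sigma.ι (fun i : {a // a ∈ s} => f i) i, ?_⟩
    simp only [Preadditive.sum_comp, Category.assoc, Sigma.ι_desc]
    rw [Finset.sum_coe_sort s (fun i => g ≫ Sigma.π f i ≫ Sigma.ι f i), ← Preadditive.comp_sum]
    exact hs.symm

lemma smd_compacts_subset : smd T (compacts T) ⊆ compacts T := by
  rintro X ⟨Y, hY, i, r, e⟩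
  refine mem_compacts_iff.2 fun α f g => ?_
  obtain ⟨s, hs⟩ := mem_compacts_iff.1 hY α f (r ≫ g)
  exact ⟨s, by simpa only [Category.assoc, reassoc_of% e] using congrArg (i ≫ ·) hs⟩

lemma mem_compacts_of_isZero {X : T} (hX : IsZero X) : X ∈ compacts T :=
  mem_compacts_iff.2 fun _ _ _ => ⟨∅, hX.eq_of_src _ _⟩

lemma sigma_mem_compacts {ι : Type v} [Finite ι] {f : ι → T} (hf : ∀ i, f i ∈ compacts T) :
    ∐ f ∈ compacts T := by
  classical
  have := Fintype.ofFinite ι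
  refine mem_compacts_iff.2 fun α F g => ?_
  choose s hs using fun i => mem_compacts_iff.1 (hf i) α F (Sigma.ι f i ≫ g)
  refine ⟨Finset.univ.biUnion s, Sigma.hom_ext _ _ fun i => ?_⟩
  rw [← Category.assoc, ← hs i, Category.assoc _ (finiteProj F (s i)),
    finiteProj_comp_finiteProj F (Finset.subset_biUnion_of_mem s (Finset.mem_univ i))]

lemma shift_mem_compacts {X : T} (hX : X ∈ compacts T) (n : ℤ) : X⟦n⟧ ∈ compacts T := by
  refine mem_compacts_iff.2 fun α f g => ?_
  let e := PreservesCoproduct.iso (shiftFunctor T (-n)) f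
  let u := (shiftShiftNeg X n).symm
  obtain ⟨s, hs⟩ := mem_compacts_iff.1 hX α _ (u.hom ≫ g⟦-n⟧' ≫ e.hom)
  refine ⟨s, (shiftFunctor T (-n)).map_injective ?_⟩
  rw [← cancel_epi u.hom, ← cancel_mono e.hom]
  simpa [e, map_finiteProj_comp_iso] using hs

lemma mem_compacts_of_distTriang {X Y Z : T} {f : X ⟶ Y} {g : Y ⟶ Z} {h : Z ⟶ X⟦(1 : ℤ)⟧}
    (hT : Triangle.mk f g h ∈ distTriang T) (hX : X ∈ compacts T) (hZ : Z ∈ compacts T) :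
    Y ∈ compacts T := by
  classical
  refine mem_compacts_iff.2 fun α F k => ?_
  obtain ⟨s, hs⟩ := mem_compacts_iff.1 hX α F (f ≫ k)
  obtain ⟨l : Z ⟶ ∐ F, hl : k - k ≫ finiteProj F s = g ≫ l⟩ :=
    Triangle.yoneda_exact₂ _ hT (k - k ≫ finiteProj F s) (by
      change f ≫ (k - k ≫ finiteProj F s) = 0
      rw [Preadditive.comp_sub, ← Category.assoc, hs, sub_self])
  obtain ⟨t, ht⟩ := mem_compacts_iff.1 hZ α F l
  have hlt : l ≫ finiteProj F (s ∪ t) = l := by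
    rw [← ht, Category.assoc, finiteProj_comp_finiteProj F Finset.subset_union_right]
  have hk : k = g ≫ l + k ≫ finiteProj F s := by rw [← hl, sub_add_cancel]
  refine ⟨s ∪ t, ?_⟩
  calc k ≫ finiteProj F (s ∪ t)
      = (g ≫ l + k ≫ finiteProj F s) ≫ finiteProj F (s ∪ t) := by rw [← hk]
    _ = g ≫ l + k ≫ finiteProj F s := by
      rw [Preadditive.add_comp, Category.assoc, hlt, Category.assoc,
        finiteProj_comp_finiteProj F Finset.subset_union_left]
    _ = k := hk.symm

instance isStableUnderRetracts_isCompactObj :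
    ObjectProperty.IsStableUnderRetracts (IsCompactObj T) where
  of_retract ρ hY := smd_compacts_subset ⟨_, hY, ρ.i, ρ.r, ρ.retract⟩

instance isTriangulated_isCompactObj : ObjectProperty.IsTriangulated (IsCompactObj T) where
  exists_zero := ⟨_, isZero_zero T, mem_compacts_of_isZero (isZero_zero T)⟩
  isStableUnderShiftBy n := ⟨fun _ hX => shift_mem_compacts hX n⟩
  toIsTriangulatedClosed₂ := .mk' fun _ hT hX hZ => mem_compacts_of_distTriang hT hX hZ

lemma addClosure_subset_compacts {U : Set T} (hU : U ⊆ compacts T) :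
    addClosure T U ⊆ compacts T :=
  fun _ ⟨_, _, hf, ⟨e⟩⟩ =>
    ObjectProperty.prop_of_iso (IsCompactObj T) e.symm (sigma_mem_compacts fun i => hU (hf i))

lemma extClosure_subset_compacts {U : Set T} (hU : U ⊆ compacts T) :
    {X | extClosure T U X} ⊆ compacts T := by
  intro X hX
  induction hX with
  | of h => exact hU h
  | zero h => exact mem_compacts_of_isZero h
  | ext f g h hT _ _ hX hZ => exact mem_compacts_of_distTriang hT hX hZ

lemma FactorsThru.of_distTriang {S S' : Set T} (hS' : S' ⊆ compacts T) {X Y Z P : T}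
    {f : X ⟶ Y} {g : Y ⟶ Z} {h : Z ⟶ X⟦(1 : ℤ)⟧} (hT : Triangle.mk f g h ∈ distTriang T)
    (hX : X ∈ compactsFactorThru S) (hP : P ∈ compacts T) {k : P ⟶ Y}
    (hk : FactorsThru S' (k ≫ g)) : FactorsThru (starSet T S S') k := by
  obtain ⟨Z', hZ', p, z, hpz⟩ := hk
  obtain ⟨W, w, d, hW⟩ := distinguished_cocone_triangle₁ p
  have hWc : W ∈ compacts T :=
    ObjectProperty.ext_of_isTriangulatedClosed₁ (IsCompactObj T) _ hW hP (hS' hZ')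
  obtain ⟨x : W ⟶ X, hx₁ : w ≫ k = x ≫ f, hx₂ : d ≫ x⟦(1 : ℤ)⟧' = z ≫ h⟩ :=
    complete_distinguished_triangle_morphism₁ _ _ hW hT k z hpz
  obtain ⟨X', hX', x₁, x₂, rfl⟩ := hX W hWc x
  obtain ⟨Y', f', g', hT'⟩ := distinguished_cocone_triangle₂ (d ≫ x₁⟦(1 : ℤ)⟧')
  obtain ⟨α : P ⟶ Y', hα₁ : w ≫ α = x₁ ≫ f', hα₂ : p ≫ 𝟙 Z' = α ≫ g'⟩ :=
    complete_distinguished_triangle_morphism₂ _ _ hW hT' x₁ (𝟙 Z') (Category.id_comp _).symm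
  obtain ⟨β : Y' ⟶ Y, hβ : f' ≫ β = x₂ ≫ f, -⟩ :=
    complete_distinguished_triangle_morphism₂ _ _ hT' hT x₂ z (by
      change (d ≫ x₁⟦(1 : ℤ)⟧') ≫ x₂⟦(1 : ℤ)⟧' = z ≫ h
      rw [Category.assoc, ← Functor.map_comp, hx₂])
  obtain ⟨y : Z' ⟶ Y, hy : k - α ≫ β = p ≫ y⟩ := Triangle.yoneda_exact₂ _ hW (k - α ≫ β) (by
    change w ≫ (k - α ≫ β) = 0
    rw [Preadditive.comp_sub, hx₁, reassoc_of% hα₁, hβ, Category.assoc, sub_self])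
  refine ⟨Y', ⟨X', Z', f', g', _, hT', hX', hZ'⟩, α, β + g' ≫ y, ?_⟩
  rw [Preadditive.comp_add, ← reassoc_of% hα₂, ← hy, add_sub_cancel]

lemma starSet_compactsFactorThru_subset {S S' : Set T} (hS' : S' ⊆ compacts T) :
    starSet T (compactsFactorThru S) (compactsFactorThru S') ⊆
      compactsFactorThru (starSet T S S') :=
  fun _ ⟨_, _, _, _, _, hT, hX, hZ⟩ P hP _ => .of_distTriang hS' hT hX hP (hZ P hP _)

lemma sigma_mem_compactsFactorThru {S : Set T} (hzero : {X | IsZero X} ⊆ S)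
    (hstar : starSet T S S ⊆ S) {α : Type v} {f : α → T} (hf : ∀ i, f i ∈ compactsFactorThru S) :
    ∐ f ∈ compactsFactorThru S := by
  intro P hP g
  obtain ⟨s, hs⟩ := mem_compacts_iff.1 hP α f g
  rw [← hs, finiteProj, Preadditive.comp_sum]
  refine factorsThru_sum hzero hstar fun i _ => ?_
  rw [← Category.assoc]
  exact (hf i P hP _).comp _

lemma bigClosure_subset_compactsFactorThru {U : Set T} (hU : U ⊆ compacts T) :
    {X | bigClosure T U X} ⊆ compactsFactorThru {X | extClosure T U X} := by
  intro X hX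
  induction hX with
  | of h => exact subset_compactsFactorThru _ (.of h)
  | zero h => exact subset_compactsFactorThru _ (.zero h)
  | coprod f _ e hf =>
    exact smd_compactsFactorThru_subset _ ⟨_, sigma_mem_compactsFactorThru (fun _ h => .zero h)
      (starSet_extClosure_subset U) hf, e.hom, e.inv, e.hom_inv_id⟩
  | ext f g h hT _ _ hX hZ =>
    exact compactsFactorThru_mono (starSet_extClosure_subset U)
      (starSet_compactsFactorThru_subset (extClosure_subset_compacts hU)
        ⟨_, _, f, g, h, hT, hX, hZ⟩)
  | retract i r e _ hY => exact smd_compactsFactorThru_subset _ ⟨_, hY, i, r, e⟩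

lemma bigAddClosure_subset_compactsFactorThru (U : Set T) :
    bigAddClosure T U ⊆ compactsFactorThru (addClosure T U) := by
  rintro X ⟨α, f, hf, ⟨e⟩⟩
  refine smd_compactsFactorThru_subset _ ⟨∐ f, fun P hP g => ?_, e.hom, e.inv, e.hom_inv_id⟩
  obtain ⟨s, h, rfl⟩ := hP α f g
  let ε : ULift.{v} (Fin s.card) ≃ {a // a ∈ s} := Equiv.ulift.trans s.equivFin.symm
  exact ⟨_, ⟨s.card, fun i => f (ε i), fun i => hf _,
    ⟨(Sigma.whiskerEquiv ε fun _ => Iso.refl _).symm⟩⟩, h, _, rfl⟩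

lemma coprodPowBig_eq_iterate (U : Set T) (n : ℕ) :
    coprodPowBig T U n = (starSet T (bigAddClosure T U))^[n] {X | IsZero X} := by
  induction n with
  | zero => rfl
  | succ n ih => rw [Function.iterate_succ_apply', ← ih, coprodPowBig]

lemma coprodPow_subset_compacts {U : Set T} (hU : U ⊆ compacts T) (n : ℕ) :
    coprodPow T U n ⊆ compacts T := by
  rw [coprodPow_eq_iterate]
  exact starSet_iterate_subset_of_isTriangulatedClosed₂ (P := IsCompactObj T)
    (addClosure_subset_compacts hU) (fun _ hX => mem_compacts_of_isZero hX) n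

lemma coprodPowBig_subset_compactsFactorThru {U : Set T} (hU : U ⊆ compacts T) (n : ℕ) :
    coprodPowBig T U n ⊆ compactsFactorThru (coprodPow T U n) := by
  induction n with
  | zero => exact subset_compactsFactorThru _
  | succ n ih =>
    exact (starSet_mono (bigAddClosure_subset_compactsFactorThru U) ih).trans
      (starSet_compactsFactorThru_subset (coprodPow_subset_compacts hU n))

instance isStableUnderRetracts_bigClosure (U : Set T) :
    ObjectProperty.IsStableUnderRetracts (bigClosure T U) where
  of_retract ρ := .retract ρ.i ρ.r ρ.retract

instance isTriangulatedClosed₂_bigClosure (U : Set T) :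
    ObjectProperty.IsTriangulatedClosed₂ (bigClosure T U) :=
  .mk' fun _ hT hX hZ => .ext _ _ _ hT hX hZ

lemma bigClosure_mono {U V : Set T} (h : U ⊆ V) :
    {X | bigClosure T U X} ⊆ {X | bigClosure T V X} := by
  intro X hX
  induction hX with
  | of hX => exact .of (h hX)
  | zero hX => exact .zero hX
  | coprod f _ e hf => exact .coprod f hf e
  | ext f g h hT _ _ hX hZ => exact .ext f g h hT hX hZ
  | retract i r e _ hY => exact .retract i r e hY

lemma bigClosure_subset_lOrth {U S : Set T} (hU : U ⊆ lOrth T S) :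
    {X | bigClosure T U X} ⊆ lOrth T S := by
  intro X hX
  induction hX with
  | of h => exact hU h
  | zero h => exact fun _ _ _ => h.eq_of_src _ _
  | coprod F _ e hF =>
    refine smd_lOrth_subset S ⟨∐ F, fun t ht k => Sigma.hom_ext _ _ fun i => ?_, e.hom, e.inv,
      e.hom_inv_id⟩
    exact (hF i t ht _).trans comp_zero.symm
  | ext f g h hT _ _ hX hZ => exact starSet_lOrth_subset S ⟨_, _, f, g, h, hT, hX, hZ⟩
  | retract i r e _ hY => exact smd_lOrth_subset S ⟨_, hY, i, r, e⟩

lemma addClosure_subset_bigAddClosure (U : Set T) : addClosure T U ⊆ bigAddClosure T U :=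
  fun _ ⟨_, f, hf, e⟩ => ⟨_, f, hf, e⟩

lemma bigAddClosure_subset_bigClosure (U : Set T) : bigAddClosure T U ⊆ {X | bigClosure T U X} :=
  fun _ ⟨_, f, hf, ⟨e⟩⟩ => .coprod f (fun i => .of (hf i)) e

lemma coprodPowBig_subset_bigClosure (U : Set T) (n : ℕ) :
    coprodPowBig T U n ⊆ {X | bigClosure T U X} := by
  rw [coprodPowBig_eq_iterate]
  exact starSet_iterate_subset_of_isTriangulatedClosed₂ (bigAddClosure_subset_bigClosure U)
    (fun _ h => .zero h) n

end Compacts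

section Unions

variable {T : Type u} {G : ℤ → Set T}

lemma unionIcc_mono {a b a' b' : ℤ} (ha : a' ≤ a) (hb : b ≤ b') :
    unionIcc T G a b ⊆ unionIcc T G a' b' :=
  Set.biUnion_subset_biUnion_left (Set.Icc_subset_Icc ha hb)

lemma unionIic_mono {b b' : ℤ} (hb : b ≤ b') : unionIic T G b ⊆ unionIic T G b' :=
  Set.biUnion_subset_biUnion_left (Set.Iic_subset_Iic.2 hb)

lemma unionIcc_subset_unionIic (a b : ℤ) : unionIcc T G a b ⊆ unionIic T G b :=
  Set.biUnion_subset_biUnion_left Set.Icc_subset_Iic_self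

end Unions

section Approximation

variable {T : Type u} [Category.{v} T] [HasZeroObject T] [HasShift T ℤ] [Preadditive T]
  [∀ n : ℤ, (shiftFunctor T n).Additive] [Pretriangulated T] {G R : ℤ → Set T}

lemma shift_one_mem_lOrth (hR : IsExtGoodMetric T R) {n : ℤ} {E : T} (hE : E ∈ lOrth T (R n)) :
    E⟦(1 : ℤ)⟧ ∈ lOrth T (R (n + 1)) := by
  intro t ht f
  have ht' : t⟦(-1 : ℤ)⟧ ∈ R n := hR.shift_neg_one n ⟨t, ht, ⟨Iso.refl _⟩⟩
  let u : E⟦(1 : ℤ)⟧⟦(-1 : ℤ)⟧ ≅ E := shiftShiftNeg E 1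
  refine (shiftFunctor T (-1 : ℤ)).map_injective ?_
  rw [← cancel_epi u.inv, Functor.map_zero, comp_zero, hE _ ht' (u.inv ≫ f⟦(-1 : ℤ)⟧')]

variable [HasCoproducts.{v} T] {A : ℤ}

lemma unionIcc_subset_compacts (hG : IsPreGenSeq T G) (a b : ℤ) :
    unionIcc T G a b ⊆ compacts T :=
  Set.iUnion₂_subset fun m _ => hG.compact m

lemma unionIic_subset_compacts (hG : IsPreGenSeq T G) (b : ℤ) : unionIic T G b ⊆ compacts T :=
  Set.iUnion₂_subset fun m _ => hG.compact m

lemma eventually_mem_lOrth (hG : IsPreGenSeq T G)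
    (hGR : ∀ n, ∀ᶠ i in Filter.atTop, homZero T (G n) (R i)) {P : T} (hP : P ∈ compacts T) :
    ∀ᶠ i in Filter.atTop, P ∈ lOrth T (R i) := by
  rw [← hG.generates] at hP
  obtain ⟨Y, hY, i, r, e⟩ := hP
  suffices h : ∀ᶠ i in Filter.atTop, Y ∈ lOrth T (R i) from
    h.mono fun n hn => smd_lOrth_subset (R n) ⟨Y, hn, i, r, e⟩
  clear e
  change extClosure T (unionAll T G) Y at hY
  induction hY with
  | of h =>
    obtain ⟨m, hm⟩ := Set.mem_iUnion.1 h
    exact (hGR m).mono fun _ hi => hi _ hm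
  | zero h => exact .of_forall fun _ _ _ _ => h.eq_of_src _ _
  | ext f g h hT _ _ hX hZ =>
    filter_upwards [hX 0 0, hZ 0 0] with n hXn hZn
    exact starSet_lOrth_subset (R n) ⟨_, _, f, g, h, hT, hXn, hZn⟩

lemma eventually_gBarInt_subset_lOrth
    (hGR : ∀ n, ∀ᶠ i in Filter.atTop, homZero T (G n) (R i)) (a b : ℤ) :
    ∀ᶠ i in Filter.atTop, gBarInt T G a b ⊆ lOrth T (R i) := by
  filter_upwards [(Filter.eventually_all_finite (Set.finite_Icc a b)).2 fun n _ => hGR n] with i hi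
  exact bigClosure_subset_lOrth (Set.iUnion₂_subset hi)

lemma compacts_subset_closCompacts (hR : IsExtGoodMetric T R) :
    compacts T ⊆ closCompacts T R :=
  fun K hK => Set.mem_iInter.2 fun n =>
    ⟨K, _, _, _, _, contractible_distinguished K, hK, hR.zero_mem n _ (isZero_zero T)⟩

-- `D` is an extension of `K` and `E⟦1⟧`, hence left orthogonal to some `R n`; a triangle exhibiting
-- `D ∈ T^c ⋆ R n` therefore splits.
lemma mem_compacts_of_mem_closCompacts (hG : IsPreGenSeq T G) (hR : IsExtGoodMetric T R)
    (hGR : ∀ n, ∀ᶠ i in Filter.atTop, homZero T (G n) (R i)) {K E D : T} {f : E ⟶ K} {g : K ⟶ D}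
    {h : D ⟶ E⟦(1 : ℤ)⟧} (hT : Triangle.mk f g h ∈ distTriang T) {a b : ℤ}
    (hE : E ∈ gBarInt T G a b) (hK : K ∈ compacts T) (hD : D ∈ closCompacts T R) :
    D ∈ compacts T := by
  obtain ⟨n, hKn, hEn⟩ := ((Filter.tendsto_atTop_add_const_right _ 1 Filter.tendsto_id).eventually
    (eventually_mem_lOrth hG hGR hK)).and (eventually_gBarInt_subset_lOrth hGR a b) |>.exists
  exact smd_compacts_subset <| mem_smd_of_mem_starSet_of_mem_lOrth
    (Set.mem_iInter.1 hD (n + 1)) <| starSet_lOrth_subset (R (n + 1))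
      ⟨_, _, _, _, _, rot_of_distTriang _ hT, hKn, shift_one_mem_lOrth hR (hEn hE)⟩

lemma gBarIntPow_subset_gBarInt (a b k : ℤ) : gBarIntPow T G a b k ⊆ gBarInt T G a b :=
  fun _ ⟨_, hY, i, r, e⟩ => .retract i r e (coprodPowBig_subset_bigClosure _ _ hY)

/-- The approximation condition of a weakly `G`-approximable triple, with all objects required to
satisfy `P`. For `P = ⊤` this is the condition itself; for `P = IsCompactObj T` it is what weak
`G`-quasiapproximability gives on compact objects. -/
def WeakApproxIn (G R : ℤ → Set T) (A : ℤ) (P : ObjectProperty T) : Prop :=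
  ∀ j : ℤ, R j ∩ {X | P X} ⊆
    starSet T (gBarInt T G (-A - j) (A - j) ∩ {X | P X}) (R (j + 1) ∩ {X | P X})

/-- The approximation condition of a `G`-approximable triple, with all objects required to satisfy
`P`, including the coproducts of objects of `G` out of which `Ḡ^{[-A-j,A-j]}_A` is built. -/
def ApproxIn (G R : ℤ → Set T) (A : ℤ) (P : ObjectProperty T) : Prop :=
  ∀ j : ℤ, R j ∩ {X | P X} ⊆
    starSet T
      (smd T ((starSet T (bigAddClosure T (unionIcc T G (-A - j) (A - j)) ∩ {X | P X}))^[A.toNat]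
        {X | IsZero X}))
      (R (j + 1) ∩ {X | P X})

lemma weakApproxIn_top (h : IsWeakGApprox T G R A) : WeakApproxIn G R A ⊤ :=
  fun j F hF =>
    let ⟨E, D, f, g, k, hT, hE, hD⟩ := h.approx j F hF.1
    ⟨E, D, f, g, k, hT, ⟨hE, trivial⟩, hD, trivial⟩

lemma approxIn_top (h : IsGApprox T G R A) : ApproxIn G R A ⊤ := by
  rintro j F ⟨hF, -⟩
  obtain ⟨E, D, f, g, k, hT, hE, hD⟩ := h.approx' j F hF
  refine ⟨E, D, f, g, k, hT, smd_mono ?_ hE, hD, trivial⟩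
  rw [coprodPowBig_eq_iterate]
  exact starSet_iterate_mono (Set.subset_inter subset_rfl fun _ _ => trivial) subset_rfl _

lemma IsGPreApprox.eventually_homZero (h : IsGPreApprox T G R A) (n : ℤ) :
    ∀ᶠ i in Filter.atTop, homZero T (G n) (R i) :=
  Filter.eventually_atTop.2 (h.cond2 n)

lemma weakApproxIn_isCompactObj (hG : IsPreGenSeq T G) (h : IsWeakGQuasiApprox T G R A) :
    WeakApproxIn G R A (IsCompactObj T) := by
  rintro j F ⟨hF, hFc⟩
  have hR := h.orthMetric.toIsExtGoodMetric
  obtain ⟨E, D, f, g, k, hT, hE, hD, hDc⟩ :=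
    h.approx j F ⟨hF, compacts_subset_closCompacts hR hFc⟩
  have hDc : D ∈ compacts T :=
    mem_compacts_of_mem_closCompacts hG hR h.eventually_homZero hT hE hFc hDc
  have hEc : E ∈ compacts T :=
    ObjectProperty.ext_of_isTriangulatedClosed₁ (IsCompactObj T) _ hT hFc hDc
  exact ⟨E, D, f, g, k, hT, ⟨hE, hEc⟩, hD, hDc⟩

lemma approxIn_isCompactObj (hG : IsPreGenSeq T G) (h : IsGQuasiApprox T G R A) :
    ApproxIn G R A (IsCompactObj T) := by
  rintro j F ⟨hF, hFc⟩
  have hR := h.orthMetric.toIsExtGoodMetric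
  have hU := unionIcc_subset_compacts hG (-A - j) (A - j)
  obtain ⟨E, D, f, g, k, hT, hE, hD, hDc⟩ :=
    h.approx' j F ⟨hF, compacts_subset_closCompacts hR hFc⟩
  have hDc : D ∈ compacts T :=
    mem_compacts_of_mem_closCompacts hG hR h.eventually_homZero hT
      (gBarIntPow_subset_gBarInt _ _ _ hE) hFc hDc
  have hEc : E ∈ compacts T :=
    ObjectProperty.ext_of_isTriangulatedClosed₁ (IsCompactObj T) _ hT hFc hDc
  have hE' : E ∈ smd T (coprodPow T (unionIcc T G (-A - j) (A - j)) A.toNat) :=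
    mem_smd_of_mem_compactsFactorThru hEc
      (smd_compactsFactorThru_subset _ (smd_mono (coprodPowBig_subset_compactsFactorThru hU _) hE))
  refine ⟨E, D, f, g, k, hT, smd_mono ?_ hE', hD, hDc⟩
  rw [coprodPow_eq_iterate]
  exact starSet_iterate_mono (Set.subset_inter (addClosure_subset_bigAddClosure _)
    (addClosure_subset_compacts hU)) subset_rfl _

lemma WeakApproxIn.subset_compactsFactorThru (hG : IsPreGenSeq T G)
    (hGR : ∀ n, ∀ᶠ i in Filter.atTop, homZero T (G n) (R i)) {P : ObjectProperty T}
    (hW : WeakApproxIn G R A P) (j : ℤ) :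
    R j ∩ {X | P X} ⊆ compactsFactorThru {X | extClosure T (unionIic T G (A - j)) X} := by
  suffices H : ∀ (n : ℕ) (j : ℤ), ∀ X ∈ R j ∩ {X | P X}, ∀ Q ∈ compacts T,
      Q ∈ lOrth T (R (j + n)) → ∀ f : Q ⟶ X,
        FactorsThru {X | extClosure T (unionIic T G (A - j)) X} f by
    intro X hX Q hQ f
    obtain ⟨N, hN, hjN⟩ :=
      ((eventually_mem_lOrth hG hGR hQ).and (Filter.eventually_ge_atTop j)).exists
    refine H (N - j).toNat j X hX Q hQ ?_ f
    rwa [Int.toNat_sub_of_le hjN, add_sub_cancel]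
  intro n
  induction n with
  | zero =>
    intro j X hX Q _ hQj f
    rw [Nat.cast_zero, add_zero] at hQj
    exact ⟨_, .zero (isZero_zero T), 0, 0, by rw [hQj X hX.1 f, zero_comp]⟩
  | succ n ih =>
    intro j X hX Q hQ hQj f
    obtain ⟨E, D, u, w, z, hT, hE, hD⟩ := hW j hX
    have hfw : FactorsThru {X | extClosure T (unionIic T G (A - (j + 1))) X} (f ≫ w) :=
      ih (j + 1) D hD Q hQ (by rwa [add_assoc, add_comm (1 : ℤ), ← Nat.cast_succ]) _
    have hE : E ∈ compactsFactorThru {X | extClosure T (unionIic T G (A - j)) X} :=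
      compactsFactorThru_mono (extClosure_mono (unionIcc_subset_unionIic _ _))
        (bigClosure_subset_compactsFactorThru (unionIcc_subset_compacts hG _ _) hE.1)
    exact (FactorsThru.of_distTriang
      (extClosure_subset_compacts (unionIic_subset_compacts hG _)) hT hE hQ
      (hfw.mono (extClosure_mono (unionIic_mono (by lia))))).mono (starSet_extClosure_subset _)

variable {P : ObjectProperty T} [P.IsTriangulated] [P.IsClosedUnderIsomorphisms]

lemma exists_approxTriangle_csum_of_iterate (hR : IsOrthMetric T R) (hcP : compacts T ⊆ {X | P X})
    {L S S' : Set T} (hLP : L ⊆ {X | P X}) {i : ℤ} {k n : ℕ}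
    (hstep : ∀ j < n, R (i + j) ∩ {X | P X} ⊆
      smd T ((starSet T L)^[k] (R (i + j + 1) ∩ {X | P X})))
    (hS : (starSet T L)^[n * k] {X | IsZero X} ⊆ compactsFactorThru S)
    (hS'c : S' ⊆ compacts T) (hS' : R (i + n) ∩ {X | P X} ⊆ compactsFactorThru S') {K : T}
    (hK : K ∈ compacts T ∩ R i) :
    ∃ L' : T, approxTriangle T (csum T K L') (smd T S) (smd T S') := by
  have hKL : K ∈ smd T ((starSet T L)^[n * k] (R (i + n) ∩ {X | P X})) := by
    refine subset_smd_starSet_iterate_mul (B := fun j : ℕ => R (i + j) ∩ {X | P X}) ?_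
      ⟨by simpa using hK.2, hcP hK.1⟩
    intro j hj
    simpa only [Nat.cast_succ, add_assoc] using hstep j hj
  have hsub : (starSet T L)^[n * k] (R (i + n) ∩ {X | P X}) ⊆
      compactsFactorThru (starSet T S S') :=
    (starSet_iterate_inter_subset (hR.orth _).subset hLP _).trans <|
      (starSet_mono hS hS').trans (starSet_compactsFactorThru_subset hS'c)
  obtain ⟨Y, hY, u, r, e⟩ := mem_smd_of_mem_compactsFactorThru hK.1 <|
    smd_compactsFactorThru_subset _ (smd_mono hsub hKL)
  obtain ⟨L', ⟨ε⟩⟩ := exists_iso_csum u r e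
  exact ⟨L', mem_starSet_of_iso ε (starSet_mono (subset_smd _) (subset_smd _) hY)⟩

lemma ApproxIn.subset_smd_starSet_iterate (hR : IsOrthMetric T R) (h : ApproxIn G R A P) {a b j : ℤ}
    (ha : a ≤ -A - j) (hb : A - j ≤ b) :
    R j ∩ {X | P X} ⊆
      smd T ((starSet T (bigAddClosure T (unionIcc T G a b) ∩ {X | P X}))^[A.toNat]
        (R (j + 1) ∩ {X | P X})) := by
  set L := bigAddClosure T (unionIcc T G (-A - j) (A - j)) ∩ {X | P X}
  have hL : L ⊆ {X | P X} := Set.inter_subset_right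
  have hL₀ : (starSet T L)^[A.toNat] {X | IsZero X} ⊆ {X | P X} :=
    starSet_iterate_subset_of_isTriangulatedClosed₂ hL (fun X hX => P.prop_of_isZero hX) _
  calc R j ∩ {X | P X}
      ⊆ starSet T (smd T ((starSet T L)^[A.toNat] {X | IsZero X})) (R (j + 1) ∩ {X | P X}) := h j
    _ ⊆ smd T (starSet T ((starSet T L)^[A.toNat] {X | IsZero X}) (R (j + 1) ∩ {X | P X})) :=
      (starSet_mono subset_rfl (subset_smd _)).trans (starSet_smd_smd_subset _ _)
    _ ⊆ smd T ((starSet T L)^[A.toNat] (R (j + 1) ∩ {X | P X})) :=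
      smd_mono <| (Set.subset_inter (starSet_mono subset_rfl Set.inter_subset_left)
        (starSet_subset_of_isTriangulatedClosed₂ hL₀ Set.inter_subset_right)).trans
        (starSet_iterate_isZero_inter_subset (hR.orth _).subset hL _)
    _ ⊆ _ := smd_mono <| starSet_iterate_mono (Set.inter_subset_inter_left _
        (bigAddClosure_mono (unionIcc_mono ha hb))) subset_rfl _

lemma WeakApproxIn.exists_approxTriangle_csum (hG : IsPreGenSeq T G) (hR : IsOrthMetric T R)
    (hGR : ∀ n, ∀ᶠ i in Filter.atTop, homZero T (G n) (R i)) (hcP : compacts T ⊆ {X | P X})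
    (h : WeakApproxIn G R A P) {i m : ℤ} (hm : 0 ≤ m) {K : T} (hK : K ∈ compacts T ∩ R i) :
    ∃ L : T, approxTriangle T (csum T K L)
      (gInt T G (-A - m + 1 - i) (A - i)) (gIic T G (A - m - i)) := by
  have hU := unionIcc_subset_compacts hG (-A - m + 1 - i) (A - i)
  refine exists_approxTriangle_csum_of_iterate
    (L := gBarInt T G (-A - m + 1 - i) (A - i) ∩ {X | P X})
    (k := 1) (n := m.toNat) hR hcP Set.inter_subset_right (fun j hj => ?_) ?_
    (extClosure_subset_compacts (unionIic_subset_compacts hG _)) ?_ hK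
  · exact (h (i + j)).trans <| (starSet_mono (Set.inter_subset_inter_left _
      (bigClosure_mono (unionIcc_mono (by lia) (by lia)))) subset_rfl).trans (subset_smd _)
  · exact (starSet_iterate_subset_of_isTriangulatedClosed₂ Set.inter_subset_left
      (fun X hX => .zero hX) _).trans (bigClosure_subset_compactsFactorThru hU)
  · convert h.subset_compactsFactorThru hG hGR (i + m) using 5
    all_goals lia

lemma ApproxIn.exists_approxTriangle_csum (hG : IsPreGenSeq T G) (hR : IsOrthMetric T R)
    (hGR : ∀ n, ∀ᶠ i in Filter.atTop, homZero T (G n) (R i)) (hcP : compacts T ⊆ {X | P X})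
    (hW : WeakApproxIn G R A P) (h : ApproxIn G R A P) (hA : 0 ≤ A) {i m : ℤ} (hm : 0 ≤ m) {K : T}
    (hK : K ∈ compacts T ∩ R i) :
    ∃ L : T, approxTriangle T (csum T K L)
      (gIntPow T G (-A - m + 1 - i) (A - i) (m * A)) (gIic T G (A - m - i)) := by
  have hU := unionIcc_subset_compacts hG (-A - m + 1 - i) (A - i)
  refine exists_approxTriangle_csum_of_iterate
    (L := bigAddClosure T (unionIcc T G (-A - m + 1 - i) (A - i)) ∩ {X | P X})
    (k := A.toNat) (n := m.toNat) hR hcP Set.inter_subset_right (fun j hj => ?_) ?_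
    (extClosure_subset_compacts (unionIic_subset_compacts hG _)) ?_ hK
  · exact h.subset_smd_starSet_iterate hR (by lia) (by lia)
  · rw [← Int.toNat_mul hm hA]
    refine (starSet_iterate_mono Set.inter_subset_left subset_rfl _).trans ?_
    rw [← coprodPowBig_eq_iterate]
    exact coprodPowBig_subset_compactsFactorThru hU _
  · convert hW.subset_compactsFactorThru hG hGR (i + m) using 5
    all_goals lia

end Approximation

theorem statement_15_general (G Rm : ℤ → Set C) (A : ℤ) (hG : IsPreGenSeq C G)
    (h : IsWeakGQuasiApprox C G Rm A ∨ IsWeakGApprox C G Rm A) :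
    (∀ i m : ℤ, 0 ≤ m → ∀ K ∈ compacts C ∩ Rm i,
      ∃ L : C, approxTriangle C (csum C K L)
        (gInt C G (-A - m + 1 - i) (A - i)) (gIic C G (A - m - i))) ∧
    ((IsGQuasiApprox C G Rm A ∨ IsGApprox C G Rm A) →
      ∀ i m : ℤ, 0 ≤ m → ∀ K ∈ compacts C ∩ Rm i,
        ∃ L : C, approxTriangle C (csum C K L)
          (gIntPow C G (-A - m + 1 - i) (A - i) (m * A)) (gIic C G (A - m - i))) := by
  refine ⟨fun i m hm K hK => ?_, fun h' i m hm K hK => ?_⟩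
  · rcases h with h | h
    · exact (weakApproxIn_isCompactObj hG h).exists_approxTriangle_csum hG h.orthMetric
        h.eventually_homZero subset_rfl hm hK
    · exact (weakApproxIn_top h).exists_approxTriangle_csum (P := ⊤) hG h.orthMetric
        h.eventually_homZero (fun _ _ => trivial) hm hK
  · rcases h' with h | h
    · exact (approxIn_isCompactObj hG h).exists_approxTriangle_csum hG h.orthMetric
        h.eventually_homZero subset_rfl
        (weakApproxIn_isCompactObj hG h.toIsWeakGQuasiApprox) h.A_pos.le hm hK
    · exact (approxIn_top h).exists_approxTriangle_csum (P := ⊤) hG h.orthMetric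
        h.eventually_homZero (fun _ _ => trivial) (weakApproxIn_top h.toIsWeakGApprox)
        h.A_pos.le hm hK

theorem statement_15 (G Rm : ℤ → Set C) (A : ℤ)
    (hcg : CompactlyGenerated C) (hG : IsGenSeq C G)
    (h : IsWeakGQuasiApprox C G Rm A ∨ IsWeakGApprox C G Rm A) :
    (∀ i m : ℤ, 0 < m → ∀ K ∈ compacts C ∩ Rm i,
      ∃ L : C, approxTriangle C (csum C K L)
        (gInt C G (-A - m + 1 - i) (A - i)) (gIic C G (A - m - i))) ∧
    ((IsGQuasiApprox C G Rm A ∨ IsGApprox C G Rm A) →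
      ∀ i m : ℤ, 0 < m → ∀ K ∈ compacts C ∩ Rm i,
        ∃ L : C, approxTriangle C (csum C K L)
          (gIntPow C G (-A - m + 1 - i) (A - i) (m * A)) (gIic C G (A - m - i))) := by
  obtain ⟨hweak, hstrong⟩ := statement_15_general C G Rm A hG.toIsPreGenSeq h
  exact ⟨fun i m hm => hweak i m hm.le, fun h' i m hm => hstrong h' i m hm.le⟩

end GApprox
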